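/- Suppose that every countable graph G=(V,E) with the following properties admits an unfriendly partition: there is a partition V = V¹ ∪ V² such that each element of V¹ has finitely many neighbours in V¹, each element of V² has infinitely many neighbours in V¹, and, writing V^F for the set of vertices of finite degree, there is no edge {x,y} with x,y ∈ V¹−V^F and no edge {x,y} with x,y ∈ V². Then every graph has an ω-unfriendly partition. -/

import Mathlib

open Cardinal

universe u

/-- `π` is an unfriendly partition of `G`. -/
def UnfriendlyPartition {V : Type u} (G : SimpleGraph V) (π : V → Fin 2) : Prop :=
  ∀ x : V, #{y : V // G.Adj x y ∧ π y = π x} ≤ #{y : V // G.Adj x y ∧ π y ≠ π x}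

/-- `π` is an ω-unfriendly partition of `G`: for each vertex `x`, the set of neighbours in the
opposite class is infinite, or at least as large as the set of neighbours in the same class. -/
def OmegaUnfriendlyPartition {V : Type u} (G : SimpleGraph V) (π : V → Fin 2) : Prop :=
  ∀ x : V, {y : V | G.Adj x y ∧ π y ≠ π x}.Infinite ∨
    #{y : V // G.Adj x y ∧ π y = π x} ≤ #{y : V // G.Adj x y ∧ π y ≠ π x}

/-!
Take a maximal pair of disjoint classes in which every vertex already has a majority, counted in
`ℕ∞`, of all its neighbours in the opposite class, and suppose that the set `R` of remaining
vertices is nonempty. By maximality each vertex of `R` has finitely many neighbours in either class,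
and every nonempty countable subset of `R` has a vertex with finitely many neighbours in that
subset: otherwise the subset could be split so that each of its vertices has infinitely many
neighbours on the other side.

Choose a nonempty countable `C ⊆ R` containing all the `R`-neighbours of each of its vertices, or
infinitely many of them if there are infinitely many. Repeatedly removing the vertices of finite
degree exhausts the graph induced on `C`, and recursion on the stage of removal yields candidates
for `V¹` and `V²`. The edges that the hypothesis forbids join vertices of infinite degree, whose
degrees stay infinite when those edges are deleted.

The neighbours which a vertex of `C` has in the two classes are simulated by attaching a gadget:
blocks of independent vertices, of sizes `0, 2, 4, …`, with consecutive blocks completely joined.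
Twins of odd degree get the same colour, so each block is monochromatic; since the sizes increase,
each block has the colour opposite to the next one, and ports of both colours can be joined to the
blocks. The hypothesis, applied to `C` with the gadget, extends the two classes by `C`,
contradicting maximality.
-/

/-- `x` has at least as many neighbours inside `S` as outside. Counting in `ℕ∞` identifies all
infinite cardinals, which is what separates ω-unfriendliness from unfriendliness. -/
def MajorityIn {V : Type*} (G : SimpleGraph V) (x : V) (S : Set V) : Prop :=
  (G.neighborSet x \ S).encard ≤ (G.neighborSet x ∩ S).encard

/-- A set as required of `V¹` in the hypothesis of the theorem, `V²` being its complement. -/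
structure IsAdmissible {V : Type*} (G : SimpleGraph V) (A : Set V) : Prop where
  finite_inter : ∀ x ∈ A, (G.neighborSet x ∩ A).Finite
  infinite_inter : ∀ x ∉ A, (G.neighborSet x ∩ A).Infinite
  finite_or_finite_of_adj : ∀ x ∈ A, ∀ y ∈ A, G.Adj x y →
    (G.neighborSet x).Finite ∨ (G.neighborSet y).Finite
  not_adj_compl : ∀ x ∉ A, ∀ y ∉ A, ¬ G.Adj x y

/-- `ρ` is ω-unfriendly once every vertex `x` has been given, for each colour `c`, `a c x`
additional neighbours coloured `c`. -/
def BiasedUnfriendly {V : Type*} (G : SimpleGraph V) (a : Fin 2 → V → ℕ) (ρ : V → Fin 2) : Prop :=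
  ∀ x, (G.neighborSet x \ {y | ρ y ≠ ρ x}).encard + a (ρ x) x ≤
    (G.neighborSet x ∩ {y | ρ y ≠ ρ x}).encard + a (ρ x + 1) x

/-- The graphs that are exhausted by repeatedly deleting all vertices of finite degree. -/
def Scattered {V : Type*} (G : SimpleGraph V) : Prop :=
  ∀ S : Set V, S.Nonempty → ∃ x ∈ S, (G.neighborSet x ∩ S).Finite

section Majority

variable {V : Type*} {G : SimpleGraph V} {x : V} {S T : Set V}

theorem MajorityIn.mono (h : MajorityIn G x S) (hST : S ⊆ T) : MajorityIn G x T :=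
  calc (G.neighborSet x \ T).encard
      ≤ (G.neighborSet x \ S).encard := Set.encard_le_encard (Set.sdiff_subset_sdiff_right hST)
    _ ≤ (G.neighborSet x ∩ S).encard := h
    _ ≤ (G.neighborSet x ∩ T).encard := Set.encard_le_encard (Set.inter_subset_inter_right _ hST)

theorem majorityIn_of_infinite (h : (G.neighborSet x ∩ S).Infinite) : MajorityIn G x S := by
  rw [MajorityIn, h.encard_eq]
  exact le_top

theorem MajorityIn.ncard_le (h : MajorityIn G x S) (hx : (G.neighborSet x).Finite) :
    (G.neighborSet x).ncard ≤ 2 * (G.neighborSet x ∩ S).ncard := by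
  have hle : (G.neighborSet x \ S).ncard ≤ (G.neighborSet x ∩ S).ncard :=
    ENat.toNat_le_toNat h (hx.inter_of_left S).encard_lt_top.ne
  have := Set.ncard_inter_add_ncard_sdiff_eq_ncard (G.neighborSet x) S hx
  omega

theorem infinite_or_mk_le_mk_iff_encard_le {s t : Set V} :
    t.Infinite ∨ #s ≤ #t ↔ s.encard ≤ t.encard := by
  rcases t.finite_or_infinite with ht | ht
  · have hlt : #t < ℵ₀ := Cardinal.lt_aleph0_iff_set_finite.mpr ht
    simp only [Set.not_infinite.mpr ht, false_or]
    exact (Cardinal.toENat_le_iff_of_lt_aleph0 hlt).symm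
  · simp only [ht, true_or, ht.encard_eq, le_top]

theorem omegaUnfriendlyPartition_iff_majorityIn {V : Type u} {G : SimpleGraph V} {π : V → Fin 2} :
    OmegaUnfriendlyPartition G π ↔ ∀ x, MajorityIn G x {y | π y ≠ π x} := by
  refine forall_congr' fun x => ?_
  have hsame : G.neighborSet x \ {y | π y ≠ π x} = {y | G.Adj x y ∧ π y = π x} := by
    ext y
    simp
  rw [MajorityIn, hsame]
  exact infinite_or_mk_le_mk_iff_encard_le

theorem UnfriendlyPartition.omegaUnfriendlyPartition {V : Type u} {G : SimpleGraph V}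
    {π : V → Fin 2} (h : UnfriendlyPartition G π) : OmegaUnfriendlyPartition G π :=
  fun x => Or.inr (h x)

theorem eq_of_neighborSet_eq_of_odd_ncard {π : V → Fin 2} {u v : V}
    (hπ : ∀ x, MajorityIn G x {y | π y ≠ π x}) (huv : G.neighborSet u = G.neighborSet v)
    (hodd : Odd (G.neighborSet u).ncard) : π u = π v := by
  by_contra hne
  have hfin : (G.neighborSet u).Finite := Set.finite_of_ncard_pos hodd.pos
  have hu := (hπ u).ncard_le hfin
  have hv := (hπ v).ncard_le (huv ▸ hfin)
  have hcompl : G.neighborSet u ∩ {y | π y ≠ π v} = G.neighborSet u \ {y | π y ≠ π u} := by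
    ext y
    simp only [Set.mem_inter_iff, Set.mem_sdiff, Set.mem_ofPred_eq]
    refine and_congr_right fun _ => ?_
    omega
  rw [← huv, hcompl] at hv
  have := Set.ncard_inter_add_ncard_sdiff_eq_ncard (G.neighborSet u) {y | π y ≠ π u} hfin
  obtain ⟨k, hk⟩ := hodd
  omega

theorem ne_of_forall_mem_eq_of_ncard_lt {π : V → Fin 2} {c : Fin 2}
    (hπ : MajorityIn G x {y | π y ≠ π x}) (hx : (G.neighborSet x).Finite)
    (hS : S ⊆ G.neighborSet x) (hc : ∀ y ∈ S, π y = c)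
    (hcard : (G.neighborSet x).ncard < 2 * S.ncard) : π x ≠ c := by
  rintro rfl
  have hsub : G.neighborSet x ∩ {y | π y ≠ π x} ⊆ G.neighborSet x \ S :=
    fun y hy => ⟨hy.1, fun hyS => hy.2 (hc y hyS)⟩
  have hle := Set.ncard_le_ncard hsub hx.sdiff
  have hmaj := hπ.ncard_le hx
  have hSx := Set.ncard_le_ncard hS hx
  rw [Set.ncard_sdiff hS (hx.subset hS)] at hle
  omega

end Majority

section Ports

/-- The vertices of `portGraph`: those of the given graph, blocks of sizes `0, 2, 4, …`, and one
port for each nonempty block. -/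
inductive PortVertex (X : Type u) : Type u
  | base (x : X) : PortVertex X
  | block (n : ℕ) (i : Fin (2 * n)) : PortVertex X
  | port (n : ℕ) : PortVertex X

namespace PortVertex

variable {X : Type u}

theorem base_injective : Function.Injective (base : X → PortVertex X) := fun _ _ => base.inj

theorem port_injective : Function.Injective (port : ℕ → PortVertex X) := fun _ _ => port.inj

theorem block_mem_range_block_iff {m n : ℕ} {j : Fin (2 * m)} :
    (block m j : PortVertex X) ∈ Set.range (block n) ↔ m = n := by
  constructor
  · rintro ⟨i, hi⟩
    injection hi with hnm
    exact hnm.symm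
  · rintro rfl
    exact ⟨j, rfl⟩

theorem ncard_range_block (n : ℕ) :
    (Set.range (block n : Fin (2 * n) → PortVertex X)).ncard = 2 * n := by
  have hinj : Function.Injective (block n : Fin (2 * n) → PortVertex X) := by
    intro i j h
    injection h
  rw [Set.ncard_range_of_injective hinj, Nat.card_fin]

instance [Countable X] : Countable (PortVertex X) := by
  let f : X ⊕ (Σ n, Fin (2 * n)) ⊕ ℕ → PortVertex X :=
    Sum.elim base (Sum.elim (fun b => block b.1 b.2) port)
  have hf : Function.Surjective f := by
    rintro (x | ⟨n, i⟩ | n)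
    · exact ⟨.inl x, rfl⟩
    · exact ⟨.inr (.inl ⟨n, i⟩), rfl⟩
    · exact ⟨.inr (.inr n), rfl⟩
  exact hf.countable

end PortVertex

open PortVertex

/-- The graph `G` with forcing gadgets attached: consecutive blocks are completely joined, port `n`
is joined to the whole of block `n + 1`, and `x` is joined to the ports in `P x`. In an ω-unfriendly
partition the blocks and the ports alternate in colour, so that the ports of `x` add neighbours of
prescribed colours to `x`. -/
def portGraph {X : Type u} (G : SimpleGraph X) (P : X → Set ℕ) : SimpleGraph (PortVertex X) :=
  SimpleGraph.fromRel fun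
    | .base x, .base y => G.Adj x y
    | .base x, .port n => n ∈ P x
    | .block n _, .block m _ => m = n + 1
    | .block n _, .port m => n = m + 1
    | _, _ => False

variable {X : Type u} {G : SimpleGraph X} {P : X → Set ℕ}

theorem portGraph_adj_base_base {x y : X} :
    (portGraph G P).Adj (base x) (base y) ↔ G.Adj x y := by
  have hne : G.Adj x y → ¬x = y := SimpleGraph.Adj.ne
  simpa [portGraph, G.adj_comm y x] using hne

theorem neighborSet_portGraph_base (x : X) :
    (portGraph G P).neighborSet (base x) = base '' G.neighborSet x ∪ port '' P x := by
  ext (y | ⟨m, j⟩ | m)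
  · simp [portGraph_adj_base_base]
  · simp [portGraph]
  · simp [portGraph]

theorem neighborSet_portGraph_block (n : ℕ) (i : Fin (2 * (n + 1))) :
    (portGraph G P).neighborSet (block (n + 1) i) =
      insert (port n) (Set.range (block n) ∪ Set.range (block (n + 2))) := by
  ext (y | ⟨m, j⟩ | m)
  · simp [portGraph]
  · simp only [Set.mem_insert_iff, Set.mem_union, block_mem_range_block_iff]
    simp only [SimpleGraph.mem_neighborSet, portGraph, SimpleGraph.fromRel_adj]
    grind
  · simp [portGraph, eq_comm]

theorem neighborSet_portGraph_port (n : ℕ) :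
    (portGraph G P).neighborSet (port n) =
      base '' {x | n ∈ P x} ∪ Set.range (block (n + 1)) := by
  ext (y | ⟨m, j⟩ | m)
  · simp [portGraph]
  · simp only [Set.mem_union, block_mem_range_block_iff]
    simp [portGraph]
  · simp [portGraph]

theorem finite_neighborSet_portGraph_base (hfin : ∀ x, (P x).Finite) (x : X) :
    ((portGraph G P).neighborSet (base x)).Finite ↔ (G.neighborSet x).Finite := by
  rw [neighborSet_portGraph_base, Set.finite_union,
    Set.finite_image_iff base_injective.injOn, and_iff_left ((hfin x).image _)]

theorem finite_neighborSet_portGraph_block (n : ℕ) (i : Fin (2 * n)) :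
    ((portGraph G P).neighborSet (block n i)).Finite := by
  obtain ⟨n, rfl⟩ : ∃ k, n = k + 1 := ⟨n - 1, by have := i.isLt; omega⟩
  rw [neighborSet_portGraph_block]
  exact ((Set.finite_range _).union (Set.finite_range _)).insert _

theorem finite_neighborSet_portGraph_port (hP : ∀ n, {x | n ∈ P x}.Subsingleton) (n : ℕ) :
    ((portGraph G P).neighborSet (port n)).Finite := by
  rw [neighborSet_portGraph_port]
  exact ((hP n).finite.image _).union (Set.finite_range _)

theorem ncard_neighborSet_portGraph_block (n : ℕ) (i : Fin (2 * (n + 1))) :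
    ((portGraph G P).neighborSet (block (n + 1) i)).ncard = 4 * n + 5 := by
  have hdisj : Disjoint (Set.range (block n)) (Set.range (block (n + 2)) : Set (PortVertex X)) := by
    rw [Set.disjoint_left]
    rintro _ ⟨j, rfl⟩ h
    have := block_mem_range_block_iff.mp h
    omega
  rw [neighborSet_portGraph_block, Set.ncard_insert_of_notMem (by simp),
    Set.ncard_union_eq hdisj (Set.finite_range _) (Set.finite_range _),
    ncard_range_block, ncard_range_block]
  omega

theorem ncard_neighborSet_portGraph_port_le (hP : ∀ n, {x | n ∈ P x}.Subsingleton) (n : ℕ) :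
    ((portGraph G P).neighborSet (port n)).ncard ≤ 2 * n + 3 := by
  have := ((hP n).image base).finite.to_subtype
  have hbase : (base '' {x | n ∈ P x}).ncard ≤ 1 :=
    Set.ncard_le_one_iff_subsingleton.mpr ((hP n).image base)
  have hunion := Set.ncard_union_le (base '' {x | n ∈ P x}) (Set.range (block (n + 1)))
  rw [ncard_range_block] at hunion
  rw [neighborSet_portGraph_port]
  omega

section Colouring

variable {π : PortVertex X → Fin 2}

theorem block_eq_block_of_majorityIn
    (hπ : ∀ v, MajorityIn (portGraph G P) v {w | π w ≠ π v}) (n : ℕ) (i j : Fin (2 * (n + 1))) :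
    π (block (n + 1) i) = π (block (n + 1) j) := by
  refine eq_of_neighborSet_eq_of_odd_ncard hπ ?_ ?_
  · rw [neighborSet_portGraph_block, neighborSet_portGraph_block]
  · rw [ncard_neighborSet_portGraph_block]
    exact ⟨2 * n + 2, by ring⟩

theorem block_ne_block_succ_of_majorityIn
    (hπ : ∀ v, MajorityIn (portGraph G P) v {w | π w ≠ π v}) (n : ℕ) (i : Fin (2 * (n + 1)))
    (j : Fin (2 * (n + 2))) : π (block (n + 1) i) ≠ π (block (n + 2) j) := by
  refine ne_of_forall_mem_eq_of_ncard_lt (S := Set.range (block (n + 2))) (hπ _)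
    (finite_neighborSet_portGraph_block _ _) ?_ ?_ ?_
  · rw [neighborSet_portGraph_block]
    exact Set.subset_union_right.trans (Set.subset_insert _ _)
  · rintro _ ⟨k, rfl⟩
    exact block_eq_block_of_majorityIn hπ (n + 1) k j
  · rw [ncard_neighborSet_portGraph_block, ncard_range_block]
    omega

theorem port_ne_block_of_majorityIn (hP : ∀ n, {x | n ∈ P x}.Subsingleton)
    (hπ : ∀ v, MajorityIn (portGraph G P) v {w | π w ≠ π v}) (n : ℕ) (i : Fin (2 * (n + 1))) :
    π (port n) ≠ π (block (n + 1) i) := by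
  refine ne_of_forall_mem_eq_of_ncard_lt (S := Set.range (block (n + 1))) (hπ _)
    (finite_neighborSet_portGraph_port hP n) ?_ ?_ ?_
  · rw [neighborSet_portGraph_port]
    exact Set.subset_union_right
  · rintro _ ⟨k, rfl⟩
    exact block_eq_block_of_majorityIn hπ n k i
  · have := ncard_neighborSet_portGraph_port_le (G := G) hP n
    rw [ncard_range_block]
    omega

theorem port_eq_of_majorityIn (hP : ∀ n, {x | n ∈ P x}.Subsingleton)
    (hπ : ∀ v, MajorityIn (portGraph G P) v {w | π w ≠ π v}) (n : ℕ) :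
    π (port n) = π (port 0) + Fin.ofNat 2 n := by
  induction n with
  | zero => simp
  | succ n ih =>
    have hn := port_ne_block_of_majorityIn hP hπ n 0
    have hn' := port_ne_block_of_majorityIn hP hπ (n + 1) 0
    have halt : π (block (n + 1) 0) ≠ π (block (n + 1 + 1) 0) :=
      block_ne_block_succ_of_majorityIn hπ n 0 0
    simp only [Fin.ext_iff, Fin.val_add, Fin.val_ofNat] at *
    omega

theorem biasedUnfriendly_of_portGraph {a : Fin 2 → X → ℕ}
    (hP : ∀ n, {x | n ∈ P x}.Subsingleton)
    (ha : ∀ c x, {n ∈ P x | Fin.ofNat 2 n = c}.encard = a c x)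
    (hπ : ∀ v, MajorityIn (portGraph G P) v {w | π w ≠ π v}) :
    BiasedUnfriendly G a fun x => π (base x) + π (port 0) := by
  intro x
  set c : Fin 2 := π (base x) + π (port 0) with hc
  have hport : ∀ n, π (port n) = π (base x) ↔ Fin.ofNat 2 n = c := by
    intro n
    rw [port_eq_of_majorityIn hP hπ n]
    omega
  have hbase : ∀ y, π (base y) = π (base x) ↔ π (base y) + π (port 0) = c := by
    intro y
    rw [hc, add_left_inj]
  have hdisj : ∀ (A : Set X) (B : Set ℕ), Disjoint (base '' A) (port '' B) := by
    intro A B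
    rw [Set.disjoint_left]
    rintro _ ⟨y, -, rfl⟩ ⟨n, -, h⟩
    cases h
  have hsame : (portGraph G P).neighborSet (base x) \ {w | π w ≠ π (base x)} =
      base '' (G.neighborSet x \ {y | π (base y) + π (port 0) ≠ c}) ∪
        port '' {n ∈ P x | Fin.ofNat 2 n = c} := by
    rw [neighborSet_portGraph_base]
    ext (y | ⟨m, j⟩ | m) <;> simp [hport, hbase]
  have hopp : (portGraph G P).neighborSet (base x) ∩ {w | π w ≠ π (base x)} =
      base '' (G.neighborSet x ∩ {y | π (base y) + π (port 0) ≠ c}) ∪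
        port '' {n ∈ P x | Fin.ofNat 2 n = c + 1} := by
    have hflip : ∀ d : Fin 2, d ≠ c ↔ d = c + 1 := by omega
    rw [neighborSet_portGraph_base]
    ext (y | ⟨m, j⟩ | m) <;> simp [hport, hbase, hflip]
  have hmaj := hπ (base x)
  rwa [MajorityIn, hsame, hopp, Set.encard_union_eq (hdisj _ _), Set.encard_union_eq (hdisj _ _),
    base_injective.encard_image, base_injective.encard_image, port_injective.encard_image,
    port_injective.encard_image, ha, ha] at hmaj

end Colouring

theorem exists_ports [Countable X] (a : Fin 2 → X → ℕ) :
    ∃ P : X → Set ℕ, (∀ n, {x | n ∈ P x}.Subsingleton) ∧ (∀ x, (P x).Finite) ∧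
      ∀ c x, {n ∈ P x | Fin.ofNat 2 n = c}.encard = a c x := by
  obtain ⟨e, he⟩ := exists_injective_nat (Σ x, Σ c, Fin (a c x))
  refine ⟨fun x => Set.range fun p : Σ c, Fin (a c x) => 2 * e ⟨x, p⟩ + p.1, ?_,
    fun x => Set.finite_range _, fun c x => ?_⟩
  · rintro n x ⟨p, hp⟩ y ⟨q, hq⟩
    have hpq : e ⟨x, p⟩ = e ⟨y, q⟩ := by
      dsimp only at hp hq
      omega
    exact congrArg Sigma.fst (he hpq)
  · have hrange : {n ∈ Set.range fun p : Σ c, Fin (a c x) => 2 * e ⟨x, p⟩ + p.1 |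
        Fin.ofNat 2 n = c} = Set.range fun i : Fin (a c x) => 2 * e ⟨x, c, i⟩ + c := by
      ext n
      constructor
      · rintro ⟨⟨⟨d, i⟩, rfl⟩, hd⟩
        obtain rfl : d = c := by
          simp only [Fin.ext_iff, Fin.val_ofNat] at hd
          omega
        exact ⟨i, rfl⟩
      · rintro ⟨i, rfl⟩
        refine ⟨⟨⟨c, i⟩, rfl⟩, ?_⟩
        simp only [Fin.ext_iff, Fin.val_ofNat]
        omega
    have hinj : Function.Injective fun i : Fin (a c x) => 2 * e ⟨x, c, i⟩ + c := by
      intro i j hij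
      have hsame : e ⟨x, c, i⟩ = e ⟨x, c, j⟩ := by
        dsimp only at hij
        omega
      simpa using he hsame
    rw [hrange, ← Set.image_univ, hinj.encard_image, Set.encard_univ, ENat.card_eq_coe_fintype_card,
      Fintype.card_fin]

theorem isAdmissible_portGraph {A : Set X} (hA : IsAdmissible G A)
    (hP : ∀ n, {x | n ∈ P x}.Subsingleton) (hfin : ∀ x, (P x).Finite) :
    IsAdmissible (portGraph G P) (base '' Aᶜ)ᶜ := by
  have hmem : ∀ x, base x ∈ (base '' Aᶜ : Set (PortVertex X))ᶜ ↔ x ∈ A := by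
    intro x
    rw [Set.mem_compl_iff, base_injective.mem_set_image, Set.notMem_compl_iff]
  refine ⟨?_, ?_, ?_, ?_⟩
  · rintro (x | ⟨n, i⟩ | n) hx
    · refine (((hA.finite_inter x ((hmem x).mp hx)).image base).union
        ((hfin x).image port)).subset ?_
      rw [neighborSet_portGraph_base]
      rintro _ ⟨⟨y, hy, rfl⟩ | hw, hyA⟩
      · exact Or.inl ⟨y, ⟨hy, (hmem y).mp hyA⟩, rfl⟩
      · exact Or.inr hw
    · exact (finite_neighborSet_portGraph_block n i).inter_of_left _
    · exact (finite_neighborSet_portGraph_port hP n).inter_of_left _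
  · intro w hw
    obtain ⟨x, hx, rfl⟩ := Set.notMem_compl_iff.mp hw
    refine ((hA.infinite_inter x hx).image base_injective.injOn).mono ?_
    rw [neighborSet_portGraph_base]
    rintro _ ⟨y, ⟨hy, hyA⟩, rfl⟩
    exact ⟨Or.inl ⟨y, hy, rfl⟩, (hmem y).mpr hyA⟩
  · have hinf : ∀ v, ((portGraph G P).neighborSet v).Infinite → ∃ x, base x = v := by
      rintro (x | ⟨n, i⟩ | n) hv
      · exact ⟨x, rfl⟩
      · exact absurd (finite_neighborSet_portGraph_block n i) hv
      · exact absurd (finite_neighborSet_portGraph_port hP n) hv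
    intro v hv w hw hvw
    by_contra! h
    obtain ⟨x, rfl⟩ := hinf v h.1
    obtain ⟨y, rfl⟩ := hinf w h.2
    rcases hA.finite_or_finite_of_adj x ((hmem x).mp hv) y ((hmem y).mp hw)
      (portGraph_adj_base_base.mp hvw) with hx | hy
    · exact h.1 ((finite_neighborSet_portGraph_base hfin x).mpr hx)
    · exact h.2 ((finite_neighborSet_portGraph_base hfin y).mpr hy)
  · intro v hv w hw hvw
    obtain ⟨x, hx, rfl⟩ := Set.notMem_compl_iff.mp hv
    obtain ⟨y, hy, rfl⟩ := Set.notMem_compl_iff.mp hw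
    exact hA.not_adj_compl x hx y hy (portGraph_adj_base_base.mp hvw)

end Ports

section Scattered

variable {X : Type*} {G : SimpleGraph X} {A : Set X} {a : Fin 2 → X → ℕ} {ρ : X → Fin 2}

-- The rank of `x` is the stage at which `x` is removed when one repeatedly deletes all vertices
-- having only finitely many neighbours left.
theorem Scattered.exists_rank {X : Type u} {G : SimpleGraph X} (hG : Scattered G) :
    ∃ rank : X → Ordinal.{u}, ∀ x, {y ∈ G.neighborSet x | rank x ≤ rank y}.Finite := by
  let peel : Set X →o Set X :=
    { toFun S := {x | (G.neighborSet x \ S).Finite}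
      monotone' S T hST x hx := hx.subset (Set.sdiff_subset_sdiff_right hST) }
  let stage : Ordinal.{u} → Set X := OrdinalApprox.lfpApprox peel ⊥
  have hlfp : peel.lfp = Set.univ := by
    by_contra hne
    obtain ⟨x, hx, hfin⟩ := hG peel.lfpᶜ (Set.nonempty_compl.mpr hne)
    refine hx (?_ : x ∈ peel.lfp)
    rw [← peel.map_lfp]
    exact hfin
  have mem_stage : ∀ o x, x ∈ stage o ↔ ∃ b < o, x ∈ peel (stage b) := by
    intro o x
    simp only [stage]
    rw [OrdinalApprox.lfpApprox]
    simp
  have hremoved : ∀ x, {b | x ∈ peel (stage b)}.Nonempty := by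
    intro x
    obtain ⟨o, ho⟩ := OrdinalApprox.lfp_mem_range_lfpApprox peel
    have hx : x ∈ stage o := by
      simp only [stage, ho, hlfp, Set.mem_univ]
    obtain ⟨b, -, hb⟩ := (mem_stage o x).mp hx
    exact ⟨b, hb⟩
  refine ⟨fun x => sInf {b | x ∈ peel (stage b)}, fun x => ?_⟩
  refine Set.Finite.subset (csInf_mem (hremoved x)) ?_
  rintro y ⟨hxy, hle⟩
  refine ⟨hxy, fun hy => ?_⟩
  obtain ⟨b, hb, hyb⟩ := (mem_stage _ y).mp hy
  exact (hb.trans_le hle).not_ge (csInf_le' hyb)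

theorem exists_set_mem_iff_of_wellFounded {r : X → X → Prop} (hr : WellFounded r)
    (Q : X → Set X → Prop) : ∃ A : Set X, ∀ x, x ∈ A ↔ Q x {y ∈ A | r y x} := by
  let mem : X → Prop := hr.fix fun x memBelow => Q x {y | ∃ h : r y x, memBelow y h}
  have mem_iff : ∀ x, mem x ↔ Q x {y | ∃ _ : r y x, mem y} := fun x => by
    simp only [mem]
    rw [hr.fix_eq]
  refine ⟨{x | mem x}, fun x => (mem_iff x).trans ?_⟩
  simp only [exists_prop, and_comm, Set.mem_ofPred_eq]

theorem Scattered.exists_finite_inter_infinite_inter (hG : Scattered G) :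
    ∃ A : Set X, (∀ x ∈ A, (G.neighborSet x ∩ A).Finite) ∧
      ∀ x ∉ A, (G.neighborSet x ∩ A).Infinite := by
  obtain ⟨rank, hrank⟩ := hG.exists_rank
  obtain ⟨A, hA⟩ := exists_set_mem_iff_of_wellFounded (InvImage.wf rank Ordinal.lt_wf)
    fun x B => (G.neighborSet x ∩ B).Finite
  refine ⟨A, fun x hx => ?_, fun x hx hfin => ?_⟩
  · refine (((hA x).mp hx).union (hrank x)).subset ?_
    rintro y ⟨hxy, hy⟩
    rcases lt_or_ge (rank y) (rank x) with hlt | hge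
    · exact Or.inl ⟨hxy, hy, hlt⟩
    · exact Or.inr ⟨hxy, hge⟩
  · exact hx ((hA x).mpr (hfin.subset (Set.inter_subset_inter_right _ fun y hy => hy.1)))

/-- `G` without the edges whose presence would keep `A` from being admissible. -/
def pruneEdges (G : SimpleGraph X) (A : Set X) : SimpleGraph X where
  Adj x y := G.Adj x y ∧ (x ∈ A ∨ y ∈ A) ∧
    (x ∈ A → y ∈ A → (G.neighborSet x).Finite ∨ (G.neighborSet y).Finite)
  symm := ⟨fun _ _ h => ⟨h.1.symm, h.2.1.symm, fun hy hx => (h.2.2 hx hy).symm⟩⟩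
  loopless := ⟨fun _ h => G.irrefl h.1⟩

theorem neighborSet_pruneEdges_subset (x : X) :
    (pruneEdges G A).neighborSet x ⊆ G.neighborSet x := fun _ h => h.1

theorem neighborSet_pruneEdges_of_finite (hinf : ∀ x ∉ A, (G.neighborSet x ∩ A).Infinite) {x : X}
    (hx : (G.neighborSet x).Finite) : (pruneEdges G A).neighborSet x = G.neighborSet x := by
  have hxA : x ∈ A := by
    by_contra h
    exact hinf x h (hx.inter_of_left A)
  ext y
  exact ⟨fun h => h.1, fun h => ⟨h, Or.inl hxA, fun _ _ => Or.inl hx⟩⟩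

theorem inter_subset_neighborSet_pruneEdges {x : X} (hx : x ∉ A) :
    G.neighborSet x ∩ A ⊆ (pruneEdges G A).neighborSet x :=
  fun _ hy => ⟨hy.1, Or.inr hy.2, fun hxA => absurd hxA hx⟩

theorem infinite_neighborSet_pruneEdges (hfin : ∀ x ∈ A, (G.neighborSet x ∩ A).Finite)
    (hinf : ∀ x ∉ A, (G.neighborSet x ∩ A).Infinite) {x : X} (hx : (G.neighborSet x).Infinite) :
    ((pruneEdges G A).neighborSet x).Infinite := by
  by_cases hxA : x ∈ A
  · refine (hx.sdiff (hfin x hxA)).mono ?_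
    rintro y ⟨hxy, hy⟩
    exact ⟨hxy, Or.inl hxA, fun _ hyA => absurd ⟨hxy, hyA⟩ hy⟩
  · exact (hinf x hxA).mono (inter_subset_neighborSet_pruneEdges hxA)

theorem isAdmissible_pruneEdges (hfin : ∀ x ∈ A, (G.neighborSet x ∩ A).Finite)
    (hinf : ∀ x ∉ A, (G.neighborSet x ∩ A).Infinite) : IsAdmissible (pruneEdges G A) A where
  finite_inter x hx := (hfin x hx).subset
    (Set.inter_subset_inter_left _ (neighborSet_pruneEdges_subset x))
  infinite_inter x hx := (hinf x hx).mono
    (Set.subset_inter (inter_subset_neighborSet_pruneEdges hx) Set.inter_subset_right)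
  finite_or_finite_of_adj x hx y hy hxy := (hxy.2.2 hx hy).imp
    (fun h => h.subset (neighborSet_pruneEdges_subset x))
    fun h => h.subset (neighborSet_pruneEdges_subset y)
  not_adj_compl _ hx _ hy hxy := hxy.2.1.elim hx hy

theorem BiasedUnfriendly.infinite_inter (hρ : BiasedUnfriendly G a ρ) {x : X}
    (hx : (G.neighborSet x).Infinite) : (G.neighborSet x ∩ {y | ρ y ≠ ρ x}).Infinite := by
  intro hfin
  have hlt := (hρ x).trans_lt
    (WithTop.add_lt_top.mpr ⟨hfin.encard_lt_top, ENat.natCast_lt_top (a (ρ x + 1) x)⟩)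
  have hsame := Set.encard_lt_top_iff.mp (le_self_add.trans_lt hlt)
  refine hx ?_
  rw [← Set.inter_union_sdiff (G.neighborSet x) {y | ρ y ≠ ρ x}]
  exact hfin.union hsame

theorem BiasedUnfriendly.of_pruneEdges (hfin : ∀ x ∈ A, (G.neighborSet x ∩ A).Finite)
    (hinf : ∀ x ∉ A, (G.neighborSet x ∩ A).Infinite)
    (hρ : BiasedUnfriendly (pruneEdges G A) a ρ) : BiasedUnfriendly G a ρ := by
  intro x
  rcases (G.neighborSet x).finite_or_infinite with hx | hx
  · rw [← neighborSet_pruneEdges_of_finite hinf hx]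
    exact hρ x
  · have hopp : (G.neighborSet x ∩ {y | ρ y ≠ ρ x}).Infinite :=
      (hρ.infinite_inter (infinite_neighborSet_pruneEdges hfin hinf hx)).mono
        (Set.inter_subset_inter_left _ (neighborSet_pruneEdges_subset x))
    rw [hopp.encard_eq, top_add]
    exact le_top

theorem Scattered.exists_biasedUnfriendly {X : Type u} [Countable X] {G : SimpleGraph X}
    (hadm : ∀ (W : Type u) [Countable W] (H : SimpleGraph W) (B : Set W), IsAdmissible H B →
      ∃ π : W → Fin 2, OmegaUnfriendlyPartition H π)
    (hG : Scattered G) (a : Fin 2 → X → ℕ) : ∃ ρ, BiasedUnfriendly G a ρ := by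
  obtain ⟨A, hfin, hinf⟩ := hG.exists_finite_inter_infinite_inter
  obtain ⟨P, hP, hPfin, hPcard⟩ := exists_ports a
  obtain ⟨π, hπ⟩ := hadm _ _ _
    (isAdmissible_portGraph (isAdmissible_pruneEdges hfin hinf) hP hPfin)
  exact ⟨_, (biasedUnfriendly_of_portGraph hP hPcard
    (omegaUnfriendlyPartition_iff_majorityIn.mp hπ)).of_pruneEdges hfin hinf⟩

end Scattered

section Selection

variable {V ι : Type*}

theorem exists_injective_forall_mem_of_infinite [Countable ι] {s : ι → Set V}
    (hs : ∀ i, (s i).Infinite) : ∃ f : ι → V, Function.Injective f ∧ ∀ i, f i ∈ s i := by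
  classical
  obtain ⟨k, hk⟩ := exists_injective_nat ι
  choose t hts htcard using fun i => (hs i).exists_subset_card_eq (k i + 1)
  have hall : ∀ J : Finset ι, J.card ≤ (J.biUnion t).card := by
    intro J
    rcases J.eq_empty_or_nonempty with rfl | hJ
    · simp
    obtain ⟨i, hi, hmax⟩ := J.exists_max_image k hJ
    calc J.card = (J.image k).card := (Finset.card_image_of_injective _ hk).symm
      _ ≤ (Finset.range (k i + 1)).card := Finset.card_le_card fun n hn => by
          obtain ⟨j, hj, rfl⟩ := Finset.mem_image.mp hn
          exact Finset.mem_range_succ_iff.mpr (hmax j hj)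
      _ = (t i).card := by rw [htcard, Finset.card_range]
      _ ≤ (J.biUnion t).card := Finset.card_le_card (Finset.subset_biUnion_of_mem t hi)
  obtain ⟨f, hf, hft⟩ := (Finset.all_card_le_biUnion_card_iff_exists_injective t).mp hall
  exact ⟨f, hf, fun i => hts i (hft i)⟩

theorem exists_forall_infinite_inter_preimage [Countable ι] {s : ι → Set V}
    (hs : ∀ i, (s i).Infinite) :
    ∃ ρ : V → Fin 2, ∀ i c, (s i ∩ ρ ⁻¹' {c}).Infinite := by
  obtain ⟨f, hf, hmem⟩ := exists_injective_forall_mem_of_infinite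
    (s := fun p : ι × Fin 2 × ℕ => s p.1) fun p => hs p.1
  refine ⟨Function.extend f (fun p => p.2.1) 0, fun i c => ?_⟩
  refine Set.infinite_of_injective_forall_mem (f := fun n : ℕ => f (i, c, n)) ?_ fun n => ?_
  · intro m n hmn
    simpa using hf hmn
  · exact ⟨hmem (i, c, n), hf.extend_apply _ _ _⟩

theorem exists_countable_forall_subset {f : V → Set V} (hf : ∀ x, (f x).Countable) (v : V) :
    ∃ C : Set V, C.Countable ∧ v ∈ C ∧ ∀ x ∈ C, f x ⊆ C := by
  let expand : Set V → Set V := fun s => ⋃ x ∈ s, f x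
  refine ⟨⋃ n, expand^[n] {v}, ?_, Set.mem_iUnion.mpr ⟨0, rfl⟩, fun x hx => ?_⟩
  · refine Set.countable_iUnion fun n => ?_
    induction n with
    | zero => exact Set.countable_singleton v
    | succ n ih =>
      rw [Function.iterate_succ_apply']
      exact ih.biUnion fun x _ => hf x
  · obtain ⟨n, hn⟩ := Set.mem_iUnion.mp hx
    refine Set.Subset.trans ?_ (Set.subset_iUnion _ (n + 1))
    rw [Function.iterate_succ_apply']
    exact Set.subset_biUnion_of_mem (u := f) hn

end Selection

section PartialPartition

/-- Disjoint classes `D 0`, `D 1`, not necessarily covering, such that every vertex of `D c` has at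
least as many neighbours in the opposite class `D (c + 1)` as anywhere else: an ω-unfriendly
partition of part of the graph that stays so however it is extended. -/
structure IsPartialUnfriendly {V : Type*} (G : SimpleGraph V) (D : Fin 2 → Set V) : Prop where
  eq_of_mem : ∀ ⦃x c d⦄, x ∈ D c → x ∈ D d → c = d
  majority : ∀ c, ∀ x ∈ D c, MajorityIn G x (D (c + 1))

variable {V : Type*} {G : SimpleGraph V} {D : Fin 2 → Set V} {x : V} {R C : Set V}

theorem exists_maximal_isPartialUnfriendly (G : SimpleGraph V) :
    ∃ D, Maximal (IsPartialUnfriendly G) D := by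
  refine zorn_le₀ {D | IsPartialUnfriendly G D} fun ch hch hchain => ?_
  have hmem : ∀ {x c}, x ∈ sSup ch c ↔ ∃ D ∈ ch, x ∈ D c := by
    intro x c
    simp
  refine ⟨sSup ch, ⟨fun x c d hc hd => ?_, fun c x hx => ?_⟩, fun D hD => le_sSup hD⟩
  · obtain ⟨D, hD, hxD⟩ := hmem.mp hc
    obtain ⟨D', hD', hxD'⟩ := hmem.mp hd
    rcases hchain.total hD hD' with hle | hle
    · exact (hch hD').eq_of_mem (hle c hxD) hxD'
    · exact (hch hD).eq_of_mem hxD (hle d hxD')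
  · obtain ⟨D, hD, hxD⟩ := hmem.mp hx
    exact ((hch hD).majority c x hxD).mono (le_sSup hD (c + 1))

theorem IsPartialUnfriendly.exists_omegaUnfriendlyPartition {V : Type u} {G : SimpleGraph V}
    {D : Fin 2 → Set V} (hD : IsPartialUnfriendly G D) (hcover : ∀ x, ∃ c, x ∈ D c) :
    ∃ π, OmegaUnfriendlyPartition G π := by
  choose π hπ using hcover
  refine ⟨π, omegaUnfriendlyPartition_iff_majorityIn.mpr fun x =>
    (hD.majority (π x) x (hπ x)).mono fun y hy hyx => ?_⟩
  have := hD.eq_of_mem hy (hyx ▸ hπ y)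
  omega

theorem IsPartialUnfriendly.union (hD : IsPartialUnfriendly G D) (hC : ∀ x ∈ C, ∀ c, x ∉ D c)
    {ρ : C → Fin 2}
    (hρ : ∀ x : C, MajorityIn G x (D (ρ x + 1) ∪ Subtype.val '' {y | ρ y ≠ ρ x})) :
    IsPartialUnfriendly G fun c => D c ∪ Subtype.val '' (ρ ⁻¹' {c}) where
  eq_of_mem := by
    rintro _ c d (hc | ⟨x, rfl, rfl⟩) (hd | ⟨y, rfl, hxy⟩)
    · exact hD.eq_of_mem hc hd
    · exact absurd (hxy ▸ hc) (hC y y.2 c)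
    · exact absurd hd (hC x x.2 d)
    · rw [Subtype.ext hxy]
  majority := by
    rintro c _ (hx | ⟨x, rfl, rfl⟩)
    · exact (hD.majority c _ hx).mono Set.subset_union_left
    · refine (hρ x).mono (Set.union_subset_union_right _ (Set.image_mono fun y hy => ?_))
      have hne : ρ y ≠ ρ x := hy
      change ρ y = ρ x + 1
      omega

theorem eq_empty_of_maximal_isPartialUnfriendly (hD : Maximal (IsPartialUnfriendly G) D)
    (hC : ∀ x ∈ C, ∀ c, x ∉ D c) {ρ : C → Fin 2}
    (hρ : ∀ x : C, MajorityIn G x (D (ρ x + 1) ∪ Subtype.val '' {y | ρ y ≠ ρ x})) : C = ∅ := by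
  by_contra! hne
  obtain ⟨x, hx⟩ := hne
  exact hC x hx (ρ ⟨x, hx⟩) (hD.le_of_ge (hD.prop.union hC hρ)
    (fun c => Set.subset_union_left) (ρ ⟨x, hx⟩) (Or.inr ⟨⟨x, hx⟩, rfl, rfl⟩))

theorem finite_inter_of_maximal_isPartialUnfriendly (hD : Maximal (IsPartialUnfriendly G) D)
    (hx : ∀ c, x ∉ D c) (c : Fin 2) : (G.neighborSet x ∩ D c).Finite := by
  by_contra hinf
  refine Set.singleton_ne_empty x (eq_empty_of_maximal_isPartialUnfriendly hD (C := {x})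
    (ρ := fun _ => c + 1) ?_ ?_)
  · rintro _ rfl
    exact hx
  · rintro ⟨_, rfl⟩
    refine (majorityIn_of_infinite hinf).mono (Set.subset_union_of_subset_left ?_ _)
    rw [show c + 1 + 1 = c by omega]

theorem exists_finite_inter_of_maximal_isPartialUnfriendly
    (hD : Maximal (IsPartialUnfriendly G) D) (hC : ∀ x ∈ C, ∀ c, x ∉ D c) (hcount : C.Countable)
    (hne : C.Nonempty) : ∃ x ∈ C, (G.neighborSet x ∩ C).Finite := by
  by_contra! hinf
  have := hcount.to_subtype
  obtain ⟨ρ, hρ⟩ := exists_forall_infinite_inter_preimage fun x : C => hinf x x.2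
  refine hne.ne_empty (eq_empty_of_maximal_isPartialUnfriendly hD (ρ := fun x => ρ x) hC
    fun x => majorityIn_of_infinite ((hρ x (ρ x + 1)).mono ?_))
  rintro y ⟨⟨hxy, hy⟩, hρy⟩
  refine ⟨hxy, Or.inr ⟨⟨y, hy⟩, ?_, rfl⟩⟩
  have heq : ρ y = ρ x + 1 := hρy
  change ρ y ≠ ρ x
  omega

theorem scattered_induce_of_maximal_isPartialUnfriendly (hD : Maximal (IsPartialUnfriendly G) D)
    (hC : ∀ x ∈ C, ∀ c, x ∉ D c) (hcount : C.Countable) : Scattered (G.induce C) := by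
  intro S hS
  have hsub : Subtype.val '' S ⊆ C := Subtype.coe_image_subset C S
  obtain ⟨_, ⟨x, hx, rfl⟩, hfin⟩ := exists_finite_inter_of_maximal_isPartialUnfriendly hD
    (fun x hx => hC x (hsub hx)) (hcount.mono hsub) (hS.image _)
  refine ⟨x, hx, (hfin.preimage Subtype.val_injective.injOn).subset ?_⟩
  rintro y ⟨hxy, hy⟩
  exact ⟨hxy, y, hy, rfl⟩

theorem exists_countable_closed_under_neighbors (G : SimpleGraph V) (hx : x ∈ R) :
    ∃ C ⊆ R, C.Countable ∧ x ∈ C ∧ ∀ y ∈ C,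
      ((G.neighborSet y ∩ R).Finite → G.neighborSet y ∩ R ⊆ C) ∧
        ((G.neighborSet y ∩ R).Infinite → (G.neighborSet y ∩ C).Infinite) := by
  have hsel : ∀ y, ∃ f ⊆ G.neighborSet y ∩ R, f.Countable ∧
      ((G.neighborSet y ∩ R).Finite → f = G.neighborSet y ∩ R) ∧
        ((G.neighborSet y ∩ R).Infinite → f.Infinite) := by
    intro y
    rcases (G.neighborSet y ∩ R).finite_or_infinite with hfin | hinf
    · exact ⟨_, subset_rfl, hfin.countable, fun _ => rfl, id⟩
    · obtain ⟨f, hf, hfc, hfinf⟩ := hinf.exists_subset_countable_infinite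
      exact ⟨f, hf, hfc, fun hfin => absurd hfin hinf, fun _ => hfinf⟩
  choose f hf hfc hffin hfinf using hsel
  obtain ⟨C, hCc, hxC, hfC⟩ := exists_countable_forall_subset hfc x
  have hfCR : ∀ y ∈ C, f y ⊆ C ∩ R :=
    fun y hy => Set.subset_inter (hfC y hy) ((hf y).trans Set.inter_subset_right)
  refine ⟨C ∩ R, Set.inter_subset_right, hCc.mono Set.inter_subset_left, ⟨hxC, hx⟩,
    fun y hy => ⟨fun hfin => ?_, fun hinf => ?_⟩⟩
  · rw [← hffin y hfin]
    exact hfCR y hy.1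
  · exact (hfinf y hinf).mono
      (Set.subset_inter ((hf y).trans Set.inter_subset_left) (hfCR y hy.1))

theorem image_neighborSet_induce_inter (x : C) (S : Set C) :
    Subtype.val '' ((G.induce C).neighborSet x ∩ S) = G.neighborSet x ∩ Subtype.val '' S :=
  Set.image_preimage_inter Subtype.val S (G.neighborSet x)

theorem BiasedUnfriendly.majorityIn_of_infinite_inter {a : Fin 2 → C → ℕ} {ρ : C → Fin 2}
    (hρ : BiasedUnfriendly (G.induce C) a ρ) (x : C) (hinf : (G.neighborSet x ∩ C).Infinite) :
    MajorityIn G x (Subtype.val '' {y | ρ y ≠ ρ x}) := by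
  have hK : ((G.induce C).neighborSet x).Infinite := by
    refine Set.Infinite.of_image Subtype.val ?_
    rwa [← Set.inter_univ ((G.induce C).neighborSet x), image_neighborSet_induce_inter,
      Set.image_univ, Subtype.range_coe]
  refine majorityIn_of_infinite ?_
  rw [← image_neighborSet_induce_inter]
  exact (hρ.infinite_inter hK).image Subtype.val_injective.injOn

theorem BiasedUnfriendly.majorityIn_of_subset {ρ : C → Fin 2}
    (hρ : BiasedUnfriendly (G.induce C) (fun c x => (G.neighborSet x ∩ D c).ncard) ρ) (x : C)
    (hC : ∀ y ∈ C, ∀ c, y ∉ D c) (hfin : ∀ c, (G.neighborSet x ∩ D c).Finite)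
    (hsub : G.neighborSet x ⊆ C ∪ ⋃ c, D c) :
    MajorityIn G x (D (ρ x + 1) ∪ Subtype.val '' {y | ρ y ≠ ρ x}) := by
  set opp : Set C := {y | ρ y ≠ ρ x}
  have hsame : G.neighborSet x \ (D (ρ x + 1) ∪ Subtype.val '' opp) ⊆
      Subtype.val '' ((G.induce C).neighborSet x \ opp) ∪ (G.neighborSet x ∩ D (ρ x)) := by
    rintro y ⟨hxy, hy⟩
    rcases hsub hxy with hyC | hyD
    · exact Or.inl ⟨⟨y, hyC⟩, ⟨hxy, fun hopp => hy (Or.inr ⟨_, hopp, rfl⟩)⟩, rfl⟩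
    · obtain ⟨c, hc⟩ := Set.mem_iUnion.mp hyD
      have hcρ : c ≠ ρ x + 1 := fun h => hy (Or.inl (h ▸ hc))
      obtain rfl : c = ρ x := by omega
      exact Or.inr ⟨hxy, hc⟩
  have hopp : Disjoint (G.neighborSet x ∩ Subtype.val '' opp) (G.neighborSet x ∩ D (ρ x + 1)) := by
    rw [Set.disjoint_left]
    rintro _ ⟨-, y, -, rfl⟩ hD
    exact hC y y.2 _ hD.2
  calc (G.neighborSet x \ (D (ρ x + 1) ∪ Subtype.val '' opp)).encard
      ≤ ((G.induce C).neighborSet x \ opp).encard + (G.neighborSet x ∩ D (ρ x)).ncard := by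
        rw [← Subtype.val_injective.encard_image, (hfin (ρ x)).cast_ncard_eq]
        exact (Set.encard_le_encard hsame).trans (Set.encard_union_le _ _)
    _ ≤ ((G.induce C).neighborSet x ∩ opp).encard + (G.neighborSet x ∩ D (ρ x + 1)).ncard := hρ x
    _ = (G.neighborSet x ∩ (D (ρ x + 1) ∪ Subtype.val '' opp)).encard := by
        rw [← Subtype.val_injective.encard_image, image_neighborSet_induce_inter,
          (hfin (ρ x + 1)).cast_ncard_eq, ← Set.encard_union_eq hopp,
          ← Set.inter_union_distrib_left, Set.union_comm]

theorem exists_mem_of_maximal_isPartialUnfriendly {V : Type u} {G : SimpleGraph V}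
    {D : Fin 2 → Set V}
    (hadm : ∀ (W : Type u) [Countable W] (H : SimpleGraph W) (B : Set W), IsAdmissible H B →
      ∃ π : W → Fin 2, OmegaUnfriendlyPartition H π)
    (hD : Maximal (IsPartialUnfriendly G) D) (x : V) : ∃ c, x ∈ D c := by
  by_contra! hx
  obtain ⟨C, hCR, hcount, hxC, hclosed⟩ :=
    exists_countable_closed_under_neighbors (R := {y | ∀ c, y ∉ D c}) G hx
  have := hcount.to_subtype
  obtain ⟨ρ, hρ⟩ := (scattered_induce_of_maximal_isPartialUnfriendly hD hCR
    hcount).exists_biasedUnfriendly hadm fun c y => (G.neighborSet y ∩ D c).ncard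
  refine Set.notMem_empty x (eq_empty_of_maximal_isPartialUnfriendly hD hCR (ρ := ρ)
    (fun y => ?_) ▸ hxC)
  rcases (G.neighborSet y ∩ {z | ∀ c, z ∉ D c}).finite_or_infinite with hfin | hinf
  · refine hρ.majorityIn_of_subset y hCR
      (finite_inter_of_maximal_isPartialUnfriendly hD (hCR y.2)) fun z hz => ?_
    by_cases hzD : ∀ c, z ∉ D c
    · exact Or.inl ((hclosed y y.2).1 hfin ⟨hz, hzD⟩)
    · push Not at hzD
      exact Or.inr (Set.mem_iUnion.mpr hzD)
  · exact (hρ.majorityIn_of_infinite_inter y ((hclosed y y.2).2 hinf)).mono Set.subset_union_right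

end PartialPartition

theorem stmt12
    (hyp : ∀ (V : Type u) (G : SimpleGraph V), Countable V →
      (∃ V1 V2 : Set V, V1 ∪ V2 = Set.univ ∧ Disjoint V1 V2 ∧
        (∀ x ∈ V1, (G.neighborSet x ∩ V1).Finite) ∧
        (∀ x ∈ V2, (G.neighborSet x ∩ V1).Infinite) ∧
        (∀ x y : V, G.Adj x y →
          ¬(x ∈ V1 \ {z : V | (G.neighborSet z).Finite} ∧
            y ∈ V1 \ {z : V | (G.neighborSet z).Finite})) ∧
        (∀ x y : V, G.Adj x y → ¬(x ∈ V2 ∧ y ∈ V2))) →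
      ∃ π : V → Fin 2, UnfriendlyPartition G π) :
    ∀ (V : Type u) (G : SimpleGraph V), ∃ π : V → Fin 2, OmegaUnfriendlyPartition G π := by
  have hadm : ∀ (W : Type u) [Countable W] (H : SimpleGraph W) (B : Set W), IsAdmissible H B →
      ∃ π : W → Fin 2, OmegaUnfriendlyPartition H π := by
    intro W hW H B hB
    obtain ⟨π, hπ⟩ := hyp W H hW ⟨B, Bᶜ, Set.union_compl_self B, disjoint_compl_right,
      hB.finite_inter, hB.infinite_inter,
      fun x y hxy h => (hB.finite_or_finite_of_adj x h.1.1 y h.2.1 hxy).elim h.1.2 h.2.2,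
      fun x y hxy h => hB.not_adj_compl x h.1 y h.2 hxy⟩
    exact ⟨π, hπ.omegaUnfriendlyPartition⟩
  intro V G
  obtain ⟨D, hD⟩ := exists_maximal_isPartialUnfriendly G
  exact hD.prop.exists_omegaUnfriendlyPartition (exists_mem_of_maximal_isPartialUnfriendly hadm hD)
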